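/- For all natural numbers m,n with m,n ∉ {1,2}, the integral ∫_ℝ Ĥ_m(x)·Ĥ_n(x)·e^{−x²}/(1+2x²)² dx equals √π·2ⁿ·n!/((n−1)(n−2)) if m = n, and equals 0 if m ≠ n. -/

import Mathlib

/-- Physicists' Hermite polynomials via the Rodrigues formula. -/
noncomputable def Hr (n : ℕ) (x : ℝ) : ℝ :=
  (-1) ^ n * Real.exp (x ^ 2) * iteratedDeriv n (fun t => Real.exp (-t ^ 2)) x

/-- The function Ĥₙ. -/
noncomputable def Hhatr (n : ℕ) (x : ℝ) : ℝ :=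
  Hr n x + 4 * (n : ℝ) * Hr (n - 2) x + 4 * (n : ℝ) * ((n : ℝ) - 3) * Hr (n - 4) x

open Polynomial MeasureTheory in
/-- Hermite polynomials as polynomials. -/
noncomputable def HP : ℕ → Polynomial ℝ
  | 0 => 1
  | (n+1) => 2 * Polynomial.X * HP n - Polynomial.derivative (HP n)

open Polynomial in
lemma HP_deriv (n : ℕ) : derivative (HP (n+1)) = 2 * ((n : ℝ[X]) + 1) * HP n := by
  induction n with
  | zero => simp [HP]
  | succ n ih =>
    have h2 : derivative (HP (n+1+1)) = 2 * HP (n+1) + 2 * X * derivative (HP (n+1))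
        - derivative (derivative (HP (n+1))) := by
      rw [HP]; simp [derivative_mul]
    have h3 : HP (n+1) = 2 * X * HP n - derivative (HP n) := by rw [HP]
    rw [h2, ih]
    have h4 : derivative (2 * ((n : ℝ[X]) + 1) * HP n) = 2 * ((n : ℝ[X]) + 1) * derivative (HP n) := by
      simp [derivative_mul]
    rw [h4, h3]
    push_cast
    ring

lemma HP_rec (n : ℕ) (x : ℝ) : (HP (n+2)).eval x
    = 2 * x * (HP (n+1)).eval x - 2 * ((n:ℝ)+1) * (HP n).eval x := by
  have h : HP (n+2) = 2 * Polynomial.X * HP (n+1) - Polynomial.derivative (HP (n+1)) := by rw [HP]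
  rw [h, HP_deriv]
  simp

lemma HP_ode (n : ℕ) : Polynomial.derivative (Polynomial.derivative (HP n))
    = 2 * Polynomial.X * Polynomial.derivative (HP n) - 2 * (n : Polynomial ℝ) * HP n := by
  have h : Polynomial.derivative (HP (n+1)) = 2 * HP n + 2 * Polynomial.X * Polynomial.derivative (HP n)
        - Polynomial.derivative (Polynomial.derivative (HP n)) := by
      rw [HP]; simp [Polynomial.derivative_mul]
  rw [HP_deriv] at h
  linear_combination h

lemma hasDerivAt_gauss (x : ℝ) :
    HasDerivAt (fun t : ℝ => Real.exp (-t ^ 2)) (-(2 * x) * Real.exp (-x ^ 2)) x := by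
  have h : HasDerivAt (fun t : ℝ => -t ^ 2) (-(2 * x)) x := by
    refine (hasDerivAt_pow 2 x).fun_neg.congr_deriv ?_
    norm_num
  simpa [mul_comm] using h.exp

lemma Hr_eq (n : ℕ) (x : ℝ) : Hr n x = (HP n).eval x := by
  have key : ∀ n : ℕ, iteratedDeriv n (fun t : ℝ => Real.exp (-t ^ 2))
      = fun x => (-1) ^ n * (HP n).eval x * Real.exp (-x ^ 2) := by
    intro n
    induction n with
    | zero => funext x; simp [HP]
    | succ n ih =>
      rw [iteratedDeriv_succ, ih]
      funext x
      have h := (((HP n).hasDerivAt x).const_mul ((-1:ℝ)^n)).mul (hasDerivAt_gauss x)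
      refine (h.deriv).trans ?_
      simp only [HP, Polynomial.eval_sub, Polynomial.eval_mul, Polynomial.eval_X, pow_succ]
      simp
      ring
  rw [Hr, key]
  have h1 : Real.exp (x^2) * Real.exp (-x^2) = 1 := by
    rw [← Real.exp_add]; simp
  have h2 : ((-1:ℝ)^n) * (-1)^n = 1 := by
    rw [← mul_pow]; simp
  linear_combination (HP n).eval x * ((-1:ℝ)^n * (-1)^n) * h1 + (HP n).eval x * h2

/-- The Wronskian polynomial. -/
noncomputable def WP (n : ℕ) : Polynomial ℝ :=
  (4 * Polynomial.X ^ 3 - 2 * Polynomial.X) * Polynomial.derivative (HP n)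
   + (4 - 2 * (n : Polynomial ℝ) - 4 * (n : Polynomial ℝ) * Polynomial.X ^ 2) * HP n

lemma WP_eq (n : ℕ) (h1 : n ≠ 1) (h2 : n ≠ 2) (x : ℝ) :
    (WP n).eval x = 2 * ((n:ℝ) - 1) * ((n:ℝ) - 2) * Hhatr n x := by
  rw [Hhatr, Hr_eq, Hr_eq, Hr_eq]
  match n, h1, h2 with
  | 0, _, _ => simp [WP, HP]; norm_num
  | 1, h, _ => exact absurd rfl h
  | 2, _, h => exact absurd rfl h
  | 3, _, _ =>
    have e2 := HP_rec 0 x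
    have e3 := HP_rec 1 x
    have e1 : (HP 1).eval x = 2 * x := by simp [HP]
    have e0 : (HP 0).eval x = 1 := by simp [HP]
    simp only [WP, HP_deriv 2]
    norm_num at e2 e3 ⊢
    rw [e3, e2, e1, e0]
    ring
  | k+4, _, _ =>
    have e2 := HP_rec k x
    have e3 := HP_rec (k+1) x
    have e4 := HP_rec (k+2) x
    have i2 : k + 4 - 2 = k + 2 := by omega
    have i4 : k + 4 - 4 = k := by omega
    simp only [WP, HP_deriv (k+3), i2, i4]
    simp
    rw [show k + 1 + 2 = k + 3 from rfl, show k+1+1 = k+2 from rfl] at e3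
    rw [show k + 2 + 2 = k + 4 from rfl, show k+2+1 = k+3 from rfl] at e4
    rw [e4, e3, e2]
    push_cast
    ring

open MeasureTheory

lemma int_poly (p : Polynomial ℝ) :
    Integrable (fun x : ℝ => p.eval x * Real.exp (-x ^ 2)) := by
  induction p using Polynomial.induction_on' with
  | add p q hp hq =>
    simp only [Polynomial.eval_add, add_mul]
    exact hp.add hq
  | monomial n a =>
    have h := integrable_rpow_mul_exp_neg_mul_sq (b := 1) one_pos (s := n)
      (by have : (0:ℝ) ≤ n := n.cast_nonneg
          linarith)
    have h2 := h.const_mul a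
    refine h2.congr (Filter.Eventually.of_forall fun x => ?_)
    simp [mul_assoc]

lemma eta_pos (x : ℝ) : 0 < 1 + 2 * x ^ 2 := by positivity

lemma int_poly_div (p : Polynomial ℝ) (k : ℕ) :
    Integrable (fun x : ℝ => p.eval x * Real.exp (-x ^ 2) / (1 + 2 * x ^ 2) ^ k) := by
  refine (int_poly p).mono ?_ (Filter.Eventually.of_forall fun x => ?_)
  · refine Continuous.aestronglyMeasurable ?_
    refine Continuous.div (by fun_prop) (by fun_prop) (fun x => (pow_pos (eta_pos x) k).ne')
  · rw [norm_div]
    refine div_le_self (norm_nonneg _) ?_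
    rw [Real.norm_of_nonneg (pow_pos (eta_pos x) k).le]
    exact one_le_pow₀ (by nlinarith [sq_nonneg x])

lemma ibp (m : ℕ) (Q : Polynomial ℝ) :
    ∫ x : ℝ, (HP (m+1) * Q).eval x * Real.exp (-x ^ 2)
      = ∫ x : ℝ, (HP m * Polynomial.derivative Q).eval x * Real.exp (-x ^ 2) := by
  have h0 := integral_eq_zero_of_hasDerivAt_of_integrable
    (f := fun x : ℝ => (HP m * Q).eval x * Real.exp (-x ^ 2))
    (f' := fun x : ℝ => (HP m * Polynomial.derivative Q).eval x * Real.exp (-x ^ 2)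
        - (HP (m+1) * Q).eval x * Real.exp (-x ^ 2))
    (fun x => by
      have h := ((HP m * Q).hasDerivAt x).mul (hasDerivAt_gauss x)
      refine h.congr_deriv ?_
      simp [HP]
      ring)
    ((int_poly _).sub (int_poly _)) (int_poly _)
  rw [integral_sub (int_poly _) (int_poly _)] at h0
  linarith

lemma ortho (m n : ℕ) : ∫ x : ℝ, (HP m * HP n).eval x * Real.exp (-x ^ 2)
    = if m = n then Real.sqrt Real.pi * 2 ^ n * (Nat.factorial n) else 0 := by
  induction m generalizing n with
  | zero =>
    cases n with
    | zero =>
      have h := integral_gaussian 1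
      simpa [HP] using h
    | succ n =>
      rw [mul_comm, ibp]
      simp [HP]
  | succ m ih =>
    cases n with
    | zero =>
      rw [ibp]
      simp [HP]
    | succ n =>
      rw [ibp, HP_deriv]
      have e : ∀ x : ℝ, (HP m * (2 * ((n : Polynomial ℝ) + 1) * HP n)).eval x * Real.exp (-x ^ 2)
          = (2 * ((n:ℝ)+1)) * ((HP m * HP n).eval x * Real.exp (-x ^ 2)) := by
        intro x; simp; ring
      simp_rw [e]
      rw [integral_const_mul, ih]
      by_cases h : m = n
      · simp [h, Nat.factorial_succ, pow_succ]; ring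
      · simp [h]

/-- Boundary polynomial. -/
noncomputable def GP (m n : ℕ) : Polynomial ℝ :=
  Polynomial.derivative (HP m) * WP n
    - HP m * (Polynomial.derivative (WP n) - 2 * Polynomial.X * WP n)

lemma main_int (m n : ℕ) :
    ∫ x : ℝ, (WP m * WP n).eval x * Real.exp (-x ^ 2) / (1 + 2 * x ^ 2) ^ 2
      = 4 * ((n:ℝ) - 1) * ((n:ℝ) - 2) * ∫ x : ℝ, (HP m * HP n).eval x * Real.exp (-x ^ 2) := by
  have h0 := integral_eq_zero_of_hasDerivAt_of_integrable
    (f := fun x : ℝ => (GP m n).eval x * Real.exp (-x ^ 2) / (1 + 2 * x ^ 2) ^ 1)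
    (f' := fun x : ℝ => (WP m * WP n).eval x * Real.exp (-x ^ 2) / (1 + 2 * x ^ 2) ^ 2
        - 4 * ((n:ℝ) - 1) * ((n:ℝ) - 2) * ((HP m * HP n).eval x * Real.exp (-x ^ 2)))
    (fun x => by
      have hd : HasDerivAt (fun x : ℝ => (1 + 2 * x ^ 2) ^ 1) (4 * x) x := by
        have := ((hasDerivAt_pow 2 x).const_mul 2).const_add 1
        simp only [pow_one]
        refine this.congr_deriv ?_
        norm_num; ring
      have h := (((GP m n).hasDerivAt x).mul (hasDerivAt_gauss x)).div hd
        (pow_pos (eta_pos x) 1).ne'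
      refine h.congr_deriv ?_
      have hη := (eta_pos x).ne'
      simp [GP, WP, HP_ode, Polynomial.derivative_mul]
      field_simp
      ring)
    ((int_poly_div _ 2).sub ((int_poly _).const_mul _)) (int_poly_div _ 1)
  rw [integral_sub (int_poly_div _ 2) ((int_poly _).const_mul _), integral_const_mul] at h0
  linarith

theorem stmt2 (m n : ℕ) (hm : m ∉ ({1, 2} : Set ℕ)) (hn : n ∉ ({1, 2} : Set ℕ)) :
    ∫ x : ℝ, Hhatr m x * Hhatr n x * Real.exp (-x ^ 2) / (1 + 2 * x ^ 2) ^ 2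
      = if m = n then
          Real.sqrt Real.pi * 2 ^ n * (Nat.factorial n) / (((n : ℝ) - 1) * ((n : ℝ) - 2))
        else 0 := by
  simp only [Set.mem_insert_iff, Set.mem_singleton_iff, not_or] at hm hn
  have c : ∀ k : ℕ, k ≠ 1 → k ≠ 2 → ((k:ℝ) - 1 ≠ 0 ∧ (k:ℝ) - 2 ≠ 0) := by
    intro k h1 h2
    exact ⟨sub_ne_zero.2 (by exact_mod_cast h1), sub_ne_zero.2 (by exact_mod_cast h2)⟩
  obtain ⟨m1, m2⟩ := c m hm.1 hm.2
  obtain ⟨n1, n2⟩ := c n hn.1 hn.2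
  have h := main_int m n
  rw [ortho] at h
  have e : ∀ x : ℝ, (WP m * WP n).eval x * Real.exp (-x ^ 2) / (1 + 2 * x ^ 2) ^ 2
      = (4 * ((m:ℝ) - 1) * ((m:ℝ) - 2) * (((n:ℝ) - 1) * ((n:ℝ) - 2))) *
        (Hhatr m x * Hhatr n x * Real.exp (-x ^ 2) / (1 + 2 * x ^ 2) ^ 2) := by
    intro x
    rw [Polynomial.eval_mul, WP_eq m hm.1 hm.2, WP_eq n hn.1 hn.2]
    ring
  simp_rw [e] at h
  rw [integral_const_mul] at h
  have hc : (4 * ((m:ℝ) - 1) * ((m:ℝ) - 2) * (((n:ℝ) - 1) * ((n:ℝ) - 2))) ≠ 0 := by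
    simp [m1, m2, n1, n2]
  apply mul_left_cancel₀ hc
  rw [h]
  by_cases hmn : m = n
  · subst hmn
    simp only [if_true]
    field_simp
  · simp [hmn]
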